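/- Let Θ, 𝒳, 𝒴 be finite sets, π a pmf on Θ, μ a pmf on 𝒳, and k(· | ν, x) a pmf on 𝒴 for every ν ∈ Θ and x ∈ 𝒳. Let n ≥ 1 and suppose the random variables θ, X_0, Y_1, X_1, Y_2, …, X_n, Y_{n+1} have joint pmf P(θ = ν, X_0 = x_0, Y_1 = y_1, …, X_n = x_n, Y_{n+1} = y_{n+1}) = π(ν) · ∏_{s=0}^{n} μ(x_s) · k(y_{s+1} | ν, x_s) (i.e., the pairs (X_s, Y_{s+1}) are i.i.d. conditioned on θ, with inputs independent of θ). Then for every 0 ≤ t ≤ n−1, I( Y_{t+2} ; θ | X_{0:t+1}, Y_{1:t+1} ) ≤ I( Y_{t+1} ; θ | X_{0:t}, Y_{1:t} ): the per-timestep estimation error of the optimal predictor is monotonically non-increasing. -/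

import Mathlib

/-!
Statement 7 (monotonicity of per-timestep estimation error): if the pairs `(X_s, Y_{s+1})` are
i.i.d. conditioned on `θ` (with inputs independent of `θ`), then
`I(Y_{t+2}; θ | X_{0:t+1}, Y_{1:t+1}) ≤ I(Y_{t+1}; θ | X_{0:t}, Y_{1:t})` for all `0 ≤ t ≤ n−1`.
Here `Y i` (for `i : Fin (n+1)`) denotes the label `Y_{i+1}`.
-/

open scoped Classical

noncomputable section

/-- Probability of the event `X = a` under the pmf `p` on a finite sample space. -/
def pr {Ω : Type*} [Fintype Ω] (p : Ω → ℝ) {A : Type*} (X : Ω → A) (a : A) : ℝ :=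
  ∑ ω, if X ω = a then p ω else 0

/-- Shannon entropy of a random variable (in nats). -/
def entropy {Ω : Type*} [Fintype Ω] (p : Ω → ℝ) {A : Type*} [Fintype A] (X : Ω → A) : ℝ :=
  ∑ a, Real.negMulLog (pr p X a)

/-- Conditional mutual information `I(X;Y|Z) = H(X,Z) + H(Y,Z) - H(X,Y,Z) - H(Z)` (in nats). -/
def condMutualInfo {Ω : Type*} [Fintype Ω] (p : Ω → ℝ) {A B C : Type*}
    [Fintype A] [Fintype B] [Fintype C] (X : Ω → A) (Y : Ω → B) (Z : Ω → C) : ℝ :=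
  entropy p (fun ω => (X ω, Z ω)) + entropy p (fun ω => (Y ω, Z ω))
    - entropy p (fun ω => ((X ω, Y ω), Z ω)) - entropy p Z

/-!
Write `D` for the pair seen at time `t` and `W` for the next input together with the pairs seen
before time `t`. Given `(θ, W)`, the next label `Y'` is independent of `D`, so expanding
`I(Y'; D, θ | W)` by the chain rule in both orders yields
`I(Y'; θ | W, D) = I(Y'; θ | W) - I(Y'; D | W) ≤ I(Y'; θ | W)`. Conditionally i.i.d. pairs are
exchangeable jointly with `θ`, hence `I(Y'; θ | W)` is unchanged when the sample at time `t + 1` is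
replaced by the one at time `t`, which gives the estimation error one step earlier.
-/

section Probability

variable {Ω : Type*} [Fintype Ω] {p : Ω → ℝ} {A B C : Type*}

lemma pr_nonneg (hp : ∀ ω, 0 ≤ p ω) (X : Ω → A) (a : A) : 0 ≤ pr p X a :=
  Finset.sum_nonneg fun ω _ => ite_nonneg (hp ω) le_rfl

lemma le_pr_self (hp : ∀ ω, 0 ≤ p ω) (X : Ω → A) (ω : Ω) : p ω ≤ pr p X (X ω) := by
  simpa [pr] using Finset.single_le_sum (f := fun ω' => if X ω' = X ω then p ω' else 0)
    (fun ω' _ => ite_nonneg (hp ω') le_rfl) (Finset.mem_univ ω)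

lemma pr_congr {X : Ω → A} {Y : Ω → B} {a : A} {b : B} (h : ∀ ω, X ω = a ↔ Y ω = b) :
    pr p X a = pr p Y b := by
  simp only [pr, h]

lemma sum_mul_comp_eq_sum_pr_mul [Fintype A] (X : Ω → A) (g : A → ℝ) :
    ∑ ω, p ω * g (X ω) = ∑ a, pr p X a * g a := by
  simp only [pr, Finset.sum_mul, ite_mul, zero_mul]
  rw [Finset.sum_comm]
  simp only [Finset.sum_ite_eq, Finset.mem_univ, if_true]

lemma sum_pr [Fintype A] (X : Ω → A) : ∑ a, pr p X a = ∑ ω, p ω := by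
  simpa using (sum_mul_comp_eq_sum_pr_mul (p := p) X fun _ => 1).symm

lemma sum_pr_prodMk [Fintype A] (X : Ω → A) (Z : Ω → C) (z : C) :
    ∑ a, pr p (fun ω => (X ω, Z ω)) (a, z) = pr p Z z := by
  simp only [pr, Prod.mk.injEq, ite_and]
  rw [Finset.sum_comm]
  simp only [Finset.sum_ite_eq, Finset.mem_univ, if_true]

lemma pr_comp [Fintype A] (X : Ω → A) (f : A → B) (b : B) :
    pr p (fun ω => f (X ω)) b = ∑ a, pr p X a * if f a = b then 1 else 0 := by
  rw [← sum_mul_comp_eq_sum_pr_mul X fun a => if f a = b then (1 : ℝ) else 0]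
  simp only [pr, mul_ite, mul_one, mul_zero]

end Probability

section Entropy

variable {Ω : Type*} [Fintype Ω] {p : Ω → ℝ} {A B : Type*} [Fintype A] [Fintype B]

lemma entropy_eq_sum_mul_neg_log (X : Ω → A) :
    entropy p X = ∑ ω, p ω * -Real.log (pr p X (X ω)) := by
  rw [sum_mul_comp_eq_sum_pr_mul X fun a => -Real.log (pr p X a)]
  simp only [entropy, Real.negMulLog_eq_neg, mul_neg]

lemma entropy_congr {X : Ω → A} {Y : Ω → B} (h : ∀ ω ω', X ω = X ω' ↔ Y ω = Y ω') :
    entropy p X = entropy p Y := by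
  simp only [entropy_eq_sum_mul_neg_log, pr_congr (p := p) fun ω' => h ω' _]

lemma entropy_comp_congr {Ω' E : Type*} [Fintype Ω'] [Finite E] {p' : Ω' → ℝ} {V : Ω → E}
    {V' : Ω' → E} (h : pr p V = pr p' V') (f : E → A) :
    entropy p (fun ω => f (V ω)) = entropy p' (fun ω => f (V' ω)) := by
  have := Fintype.ofFinite E
  simp only [entropy, pr_comp, h]

end Entropy

section CondMutualInfo

variable {Ω : Type*} [Fintype Ω] {p : Ω → ℝ} {A B C D : Type*}
  [Fintype A] [Fintype B] [Fintype C] [Fintype D]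

lemma condMutualInfo_congr {A' B' C' : Type*} [Fintype A'] [Fintype B'] [Fintype C']
    {X : Ω → A} {Y : Ω → B} {Z : Ω → C} {X' : Ω → A'} {Y' : Ω → B'} {Z' : Ω → C'}
    (hX : ∀ ω ω', X ω = X ω' ↔ X' ω = X' ω') (hY : ∀ ω ω', Y ω = Y ω' ↔ Y' ω = Y' ω')
    (hZ : ∀ ω ω', Z ω = Z ω' ↔ Z' ω = Z' ω') :
    condMutualInfo p X Y Z = condMutualInfo p X' Y' Z' := by
  unfold condMutualInfo
  congr 1
  · congr 1
    · congr 1 <;> exact entropy_congr fun ω ω' => by simp only [Prod.mk.injEq, hX, hY, hZ]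
    · exact entropy_congr fun ω ω' => by simp only [Prod.mk.injEq, hX, hY, hZ]
  · exact entropy_congr hZ

lemma condMutualInfo_comp_congr {Ω' E : Type*} [Fintype Ω'] [Finite E] {p' : Ω' → ℝ}
    {V : Ω → E} {V' : Ω' → E} (h : pr p V = pr p' V') (f : E → A) (g : E → B) (k : E → C) :
    condMutualInfo p (fun ω => f (V ω)) (fun ω => g (V ω)) (fun ω => k (V ω))
      = condMutualInfo p' (fun ω => f (V' ω)) (fun ω => g (V' ω)) (fun ω => k (V' ω)) := by
  unfold condMutualInfo
  rw [entropy_comp_congr h fun e => (f e, k e), entropy_comp_congr h fun e => (g e, k e),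
    entropy_comp_congr h fun e => ((f e, g e), k e), entropy_comp_congr h k]

lemma condMutualInfo_prodMk_right (X : Ω → A) (Y : Ω → B) (W : Ω → D) (Z : Ω → C) :
    condMutualInfo p X (fun ω => (Y ω, W ω)) Z
      = condMutualInfo p X Y Z + condMutualInfo p X W (fun ω => (Y ω, Z ω)) := by
  have hYW : entropy p (fun ω => ((Y ω, W ω), Z ω)) = entropy p (fun ω => (W ω, Y ω, Z ω)) :=
    entropy_congr fun ω ω' => by simp only [Prod.mk.injEq]; tauto
  have hXY : entropy p (fun ω => ((X ω, Y ω), Z ω)) = entropy p (fun ω => (X ω, Y ω, Z ω)) :=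
    entropy_congr fun ω ω' => by simp only [Prod.mk.injEq, and_assoc]
  have hXYW : entropy p (fun ω => ((X ω, Y ω, W ω), Z ω))
      = entropy p (fun ω => ((X ω, W ω), Y ω, Z ω)) :=
    entropy_congr fun ω ω' => by simp only [Prod.mk.injEq]; tauto
  unfold condMutualInfo
  rw [hYW, hXY, hXYW]
  ring

lemma condMutualInfo_eq_sum_mul_log (hp : ∀ ω, 0 ≤ p ω) (X : Ω → A) (Y : Ω → B) (Z : Ω → C) :
    condMutualInfo p X Y Z = ∑ ω, p ω * Real.log
      (pr p (fun ω => ((X ω, Y ω), Z ω)) ((X ω, Y ω), Z ω) * pr p Z (Z ω)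
        / (pr p (fun ω => (X ω, Z ω)) (X ω, Z ω) * pr p (fun ω => (Y ω, Z ω)) (Y ω, Z ω))) := by
  simp only [condMutualInfo, entropy_eq_sum_mul_neg_log, ← Finset.sum_add_distrib,
    ← Finset.sum_sub_distrib]
  refine Finset.sum_congr rfl fun ω _ => ?_
  rcases (hp ω).eq_or_lt with h0 | h0
  · simp [← h0]
  · have hXYZ := (h0.trans_le (le_pr_self hp (fun ω => ((X ω, Y ω), Z ω)) ω)).ne'
    have hXZ := (h0.trans_le (le_pr_self hp (fun ω => (X ω, Z ω)) ω)).ne'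
    have hYZ := (h0.trans_le (le_pr_self hp (fun ω => (Y ω, Z ω)) ω)).ne'
    have hZ := (h0.trans_le (le_pr_self hp Z ω)).ne'
    rw [Real.log_div (mul_ne_zero hXYZ hZ) (mul_ne_zero hXZ hYZ), Real.log_mul hXYZ hZ,
      Real.log_mul hXZ hYZ]
    ring

lemma sum_mul_pr_mul_pr_div_le (hp : ∀ ω, 0 ≤ p ω) (X : Ω → A) (Y : Ω → B) (Z : Ω → C) :
    ∑ ω, p ω * (pr p (fun ω => (X ω, Z ω)) (X ω, Z ω) * pr p (fun ω => (Y ω, Z ω)) (Y ω, Z ω)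
      / (pr p (fun ω => ((X ω, Y ω), Z ω)) ((X ω, Y ω), Z ω) * pr p Z (Z ω))) ≤ ∑ ω, p ω := by
  set P := pr p fun ω => ((X ω, Y ω), Z ω)
  set PX := pr p fun ω => (X ω, Z ω)
  set PY := pr p fun ω => (Y ω, Z ω)
  set PZ := pr p Z
  have cancel_le (v : (A × B) × C) :
      P v * (PX (v.1.1, v.2) * PY (v.1.2, v.2) / (P v * PZ v.2))
        ≤ PX (v.1.1, v.2) * PY (v.1.2, v.2) / PZ v.2 := by
    have hnonneg : 0 ≤ PX (v.1.1, v.2) * PY (v.1.2, v.2) / PZ v.2 :=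
      div_nonneg (mul_nonneg (pr_nonneg hp _ _) (pr_nonneg hp _ _)) (pr_nonneg hp _ _)
    calc P v * (PX (v.1.1, v.2) * PY (v.1.2, v.2) / (P v * PZ v.2))
        = P v / P v * (PX (v.1.1, v.2) * PY (v.1.2, v.2) / PZ v.2) := by ring
      _ ≤ PX (v.1.1, v.2) * PY (v.1.2, v.2) / PZ v.2 :=
        mul_le_of_le_one_left hnonneg (div_self_le_one _)
  calc ∑ ω, p ω * (PX (X ω, Z ω) * PY (Y ω, Z ω) / (P ((X ω, Y ω), Z ω) * PZ (Z ω)))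
      = ∑ v, P v * (PX (v.1.1, v.2) * PY (v.1.2, v.2) / (P v * PZ v.2)) :=
        sum_mul_comp_eq_sum_pr_mul (fun ω => ((X ω, Y ω), Z ω))
          fun v => PX (v.1.1, v.2) * PY (v.1.2, v.2) / (P v * PZ v.2)
    _ ≤ ∑ v : (A × B) × C, PX (v.1.1, v.2) * PY (v.1.2, v.2) / PZ v.2 :=
        Finset.sum_le_sum fun v _ => cancel_le v
    _ = ∑ z, (∑ x, PX (x, z)) * (∑ y, PY (y, z)) / PZ z := by
        simp only [Fintype.sum_prod_type_right (γ := ℝ) (α₂ := C), Fintype.sum_prod_type,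
          ← Finset.sum_div, Fintype.sum_mul_sum]
    _ = ∑ z, PZ z := by
        simp only [PX, PY, PZ, sum_pr_prodMk, mul_self_div_self]
    _ = ∑ ω, p ω := sum_pr Z

lemma condMutualInfo_nonneg (hp : ∀ ω, 0 ≤ p ω) (X : Ω → A) (Y : Ω → B) (Z : Ω → C) :
    0 ≤ condMutualInfo p X Y Z := by
  refine (sub_nonneg.2 (sum_mul_pr_mul_pr_div_le hp X Y Z)).trans ?_
  rw [condMutualInfo_eq_sum_mul_log hp, ← Finset.sum_sub_distrib]
  refine Finset.sum_le_sum fun ω _ => ?_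
  rcases (hp ω).eq_or_lt with h0 | h0
  · simp [← h0]
  · have hXYZ := h0.trans_le (le_pr_self hp (fun ω => ((X ω, Y ω), Z ω)) ω)
    have hXZ := h0.trans_le (le_pr_self hp (fun ω => (X ω, Z ω)) ω)
    have hYZ := h0.trans_le (le_pr_self hp (fun ω => (Y ω, Z ω)) ω)
    have hZ := h0.trans_le (le_pr_self hp Z ω)
    rw [← mul_one_sub, ← inv_div]
    exact mul_le_mul_of_nonneg_left (Real.one_sub_inv_le_log_of_pos (by positivity)) h0.le

lemma condMutualInfo_eq_zero_of_pr_eq_mul (hp : ∀ ω, 0 ≤ p ω) {X : Ω → A} {Y : Ω → B} {Z : Ω → C}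
    (f : A → C → ℝ) (g : B → C → ℝ)
    (h : ∀ x y z, pr p (fun ω => ((X ω, Y ω), Z ω)) ((x, y), z) = f x z * g y z) :
    condMutualInfo p X Y Z = 0 := by
  have hXZ x z : pr p (fun ω => (X ω, Z ω)) (x, z) = f x z * ∑ y, g y z := by
    simp only [← sum_pr_prodMk Y (fun ω => (X ω, Z ω)), Finset.mul_sum, ← h]
    exact Finset.sum_congr rfl fun y _ => pr_congr fun ω => by simp only [Prod.mk.injEq]; tauto
  have hYZ y z : pr p (fun ω => (Y ω, Z ω)) (y, z) = (∑ x, f x z) * g y z := by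
    simp only [← sum_pr_prodMk X (fun ω => (Y ω, Z ω)), Finset.sum_mul, ← h]
    exact Finset.sum_congr rfl fun x _ => pr_congr fun ω => by simp only [Prod.mk.injEq, and_assoc]
  have hZ z : pr p Z z = (∑ x, f x z) * ∑ y, g y z := by
    simp only [← sum_pr_prodMk X Z, hXZ, Finset.sum_mul]
  have hprod x y z : pr p (fun ω => ((X ω, Y ω), Z ω)) ((x, y), z) * pr p Z z
      = pr p (fun ω => (X ω, Z ω)) (x, z) * pr p (fun ω => (Y ω, Z ω)) (y, z) := by
    rw [h, hXZ, hYZ, hZ]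
    ring
  rw [condMutualInfo_eq_sum_mul_log hp]
  refine Finset.sum_eq_zero fun ω _ => ?_
  rw [hprod, Real.log_div_self, mul_zero]

lemma condMutualInfo_prodMk_le (hp : ∀ ω, 0 ≤ p ω) {X : Ω → A} {Y : Ω → B} {W : Ω → D} {Z : Ω → C}
    (h : condMutualInfo p X W (fun ω => (Y ω, Z ω)) = 0) :
    condMutualInfo p X Y (fun ω => (W ω, Z ω)) ≤ condMutualInfo p X Y Z := by
  have hswap : condMutualInfo p X (fun ω => (Y ω, W ω)) Z
      = condMutualInfo p X (fun ω => (W ω, Y ω)) Z :=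
    condMutualInfo_congr (fun _ _ => Iff.rfl)
      (fun ω ω' => by simp only [Prod.mk.injEq, and_comm]) fun _ _ => Iff.rfl
  rw [condMutualInfo_prodMk_right, condMutualInfo_prodMk_right] at hswap
  linarith [condMutualInfo_nonneg hp X W Z]

end CondMutualInfo

section CondIID

variable {Ω Θ A ι κ : Type*} [Fintype Ω] [Fintype A] [Fintype ι] [Fintype κ]
  {p : Ω → ℝ} {θ : Ω → Θ} {V : ι → Ω → A} {π : Θ → ℝ} {q : Θ → A → ℝ}

/-- The samples `V i` are i.i.d. conditionally on `θ`: given `θ = ν`, which has weight `π ν`, they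
are independent with common law `q ν`. This is encoded by factorizing the joint law rather than by
conditioning, so nothing has to be divided by the probability of `θ = ν`. -/
structure IsCondIID (p : Ω → ℝ) (θ : Ω → Θ) (V : ι → Ω → A) (π : Θ → ℝ) (q : Θ → A → ℝ) :
    Prop where
  sum_eq_one : ∀ ν, ∑ a, q ν a = 1
  pr_eq : ∀ ν v, pr p (fun ω => (θ ω, fun i => V i ω)) (ν, v) = π ν * ∏ i, q ν (v i)

namespace IsCondIID

lemma comp_equiv (h : IsCondIID p θ V π q) (e : κ ≃ ι) :
    IsCondIID p θ (fun j => V (e j)) π q where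
  sum_eq_one := h.sum_eq_one
  pr_eq ν v := by
    rw [← e.symm.prod_comp fun j => q ν (v j), ← h.pr_eq ν fun i => v (e.symm i)]
    refine pr_congr fun ω => ?_
    simp only [Prod.mk.injEq, funext_iff, e.forall_congr_left, e.apply_symm_apply]

lemma comp_inl {V : κ ⊕ ι → Ω → A} (h : IsCondIID p θ V π q) :
    IsCondIID p θ (fun j => V (Sum.inl j)) π q where
  sum_eq_one := h.sum_eq_one
  pr_eq ν v := by
    have hsplit (w : ι → A) : pr p (fun ω => (fun i => V (Sum.inr i) ω, θ ω,
        fun j => V (Sum.inl j) ω)) (w, ν, v) = π ν * ((∏ j, q ν (v j)) * ∏ i, q ν (w i)) := by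
      have hjoint := h.pr_eq ν (Sum.elim v w)
      simp only [Fintype.prod_sum_type, Sum.elim_inl, Sum.elim_inr] at hjoint
      rw [← hjoint]
      refine pr_congr fun ω => ?_
      simp only [Prod.mk.injEq, funext_iff, Sum.forall, Sum.elim_inl, Sum.elim_inr]
      tauto
    have hsum : ∑ w : ι → A, ∏ i, q ν (w i) = 1 := by
      rw [← Fintype.piFinset_univ, Finset.sum_prod_piFinset, Finset.prod_eq_one]
      exact fun _ _ => h.sum_eq_one ν
    rw [← sum_pr_prodMk fun ω i => V (Sum.inr i) ω]
    simp only [hsplit, ← Finset.mul_sum, hsum, mul_one]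

lemma comp_injective (h : IsCondIID p θ V π q) {s : κ → ι} (hs : Function.Injective s) :
    IsCondIID p θ (fun j => V (s j)) π q :=
  (h.comp_equiv (((Equiv.ofInjective s hs).sumCongr (Equiv.refl _)).trans
    (Equiv.Set.sumCompl (Set.range s)))).comp_inl

lemma pr_comp_eq_pr_comp {J : Type*} (h : IsCondIID p θ V π q) {s s' : J → ι}
    (hs : Function.Injective s) (hs' : Function.Injective s') :
    pr p (fun ω => (θ ω, fun j => V (s j) ω)) = pr p (fun ω => (θ ω, fun j => V (s' j) ω)) := by
  have := Fintype.ofInjective s hs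
  ext ⟨ν, v⟩
  rw [(h.comp_injective hs).pr_eq, (h.comp_injective hs').pr_eq]

end IsCondIID

lemma isCondIID_prodMk {𝒳 𝒴 : Type*} [Fintype 𝒳] [Fintype 𝒴] {X : ι → Ω → 𝒳} {Y : ι → Ω → 𝒴}
    {μ : Θ → 𝒳 → ℝ} {k : 𝒴 → Θ → 𝒳 → ℝ} (hμ : ∀ ν, ∑ a, μ ν a = 1)
    (hk : ∀ ν a, ∑ b, k b ν a = 1)
    (hjoint : ∀ ν x y, pr p (fun ω => (θ ω, fun s => X s ω, fun s => Y s ω)) (ν, x, y)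
      = π ν * ∏ s, μ ν (x s) * k (y s) ν (x s)) :
    IsCondIID p θ (fun s ω => (X s ω, Y s ω)) π (fun ν v => μ ν v.1 * k v.2 ν v.1) where
  sum_eq_one ν := by simp only [Fintype.sum_prod_type, ← Finset.mul_sum, hk, mul_one, hμ]
  pr_eq ν v := by
    rw [← hjoint ν (fun s => (v s).1) fun s => (v s).2]
    exact pr_congr fun ω => by simp only [Prod.ext_iff, funext_iff, forall_and]

end CondIID

section Monotonicity

-- `none` indexes the newest sample, `some none` the one before it, `some (some j)` the older ones.
variable {Ω Θ 𝒳 𝒴 κ : Type*} [Fintype Ω] [Fintype Θ] [Fintype 𝒳] [Fintype 𝒴] [Fintype κ]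
  [DecidableEq κ] {p : Ω → ℝ} {θ : Ω → Θ} {X : Option (Option κ) → Ω → 𝒳}
  {Y : Option (Option κ) → Ω → 𝒴} {π : Θ → ℝ} {q : Θ → 𝒳 × 𝒴 → ℝ}

namespace IsCondIID

lemma condMutualInfo_label_sample_eq_zero (h : IsCondIID p θ (fun i ω => (X i ω, Y i ω)) π q)
    (hp : ∀ ω, 0 ≤ p ω) :
    condMutualInfo p (Y none) (fun ω => (X (some none) ω, Y (some none) ω))
      (fun ω => (θ ω, X none ω, fun j => (X (some (some j)) ω, Y (some (some j)) ω))) = 0 := by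
  refine condMutualInfo_eq_zero_of_pr_eq_mul hp (fun y z => q z.1 (z.2.1, y))
    (fun d z => π z.1 * (q z.1 d * ∏ j, q z.1 (z.2.2 j))) fun y d ⟨ν, x, w⟩ => ?_
  have hjoint := h.pr_eq ν fun i => i.elim (x, y) fun i => i.elim d w
  simp only [Fintype.prod_option, Option.elim_none, Option.elim_some] at hjoint
  rw [mul_left_comm, ← hjoint]
  refine pr_congr fun ω => ?_
  simp only [Prod.mk.injEq, funext_iff, Option.forall, Option.elim_none, Option.elim_some]
  tauto

lemma condMutualInfo_label_param_eq (h : IsCondIID p θ (fun i ω => (X i ω, Y i ω)) π q) :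
    condMutualInfo p (Y none) θ
        (fun ω => (X none ω, fun j => (X (some (some j)) ω, Y (some (some j)) ω)))
      = condMutualInfo p (Y (some none)) θ
        (fun ω => (X (some none) ω, fun j => (X (some (some j)) ω, Y (some (some j)) ω))) :=
  condMutualInfo_comp_congr
    (h.pr_comp_eq_pr_comp (Option.map_injective (Option.some_injective κ))
      (Option.some_injective (Option κ)))
    (fun v : Θ × (Option κ → 𝒳 × 𝒴) => (v.2 none).2) Prod.fst
    (fun v => ((v.2 none).1, fun j => v.2 (some j)))

lemma condMutualInfo_label_param_le (h : IsCondIID p θ (fun i ω => (X i ω, Y i ω)) π q)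
    (hp : ∀ ω, 0 ≤ p ω) :
    condMutualInfo p (Y none) θ (fun ω => ((X (some none) ω, Y (some none) ω),
        X none ω, fun j => (X (some (some j)) ω, Y (some (some j)) ω)))
      ≤ condMutualInfo p (Y (some none)) θ
        (fun ω => (X (some none) ω, fun j => (X (some (some j)) ω, Y (some (some j)) ω))) :=
  (condMutualInfo_prodMk_le hp (h.condMutualInfo_label_sample_eq_zero hp)).trans_eq
    h.condMutualInfo_label_param_eq

end IsCondIID

end Monotonicity

theorem statement7_general {Ω Θ 𝒳 𝒴 : Type*} [Fintype Ω] [Fintype Θ] [Fintype 𝒳] [Fintype 𝒴]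
    {N : ℕ} {p : Ω → ℝ} (hp : ∀ ω, 0 ≤ p ω) {θ : Ω → Θ} {X : Fin N → Ω → 𝒳} {Y : Fin N → Ω → 𝒴}
    {π : Θ → ℝ} {q : Θ → 𝒳 × 𝒴 → ℝ} (h : IsCondIID p θ (fun s ω => (X s ω, Y s ω)) π q)
    (t : ℕ) (ht : t + 1 < N) :
    condMutualInfo p (Y ⟨t + 1, ht⟩) θ
        (fun ω => ((fun i : Fin (t + 2) => X ⟨i, by omega⟩ ω),
          (fun i : Fin (t + 1) => Y ⟨i, by omega⟩ ω)))
      ≤ condMutualInfo p (Y ⟨t, by omega⟩) θ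
        (fun ω => ((fun i : Fin (t + 1) => X ⟨i, by omega⟩ ω),
          (fun i : Fin t => Y ⟨i, by omega⟩ ω))) := by
  let s : Option (Option (Fin t)) → Fin N := fun i =>
    i.elim ⟨t + 1, ht⟩ fun i => i.elim ⟨t, by omega⟩ (Fin.castLE (by omega))
  have hs : Function.Injective s := by
    simp only [Option.injective_iff, Set.mem_range, not_exists, Function.comp_apply, s,
      Option.forall, Option.elim_none, Option.elim_some, Fin.ext_iff, Fin.val_castLE]
    exact ⟨⟨Fin.castLE_injective (by omega), fun i => i.isLt.ne⟩, by omega, fun i => by omega⟩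
  refine ((condMutualInfo_congr (fun _ _ => Iff.rfl) (fun _ _ => Iff.rfl) ?_).trans_le
    ((h.comp_injective hs).condMutualInfo_label_param_le hp)).trans_eq
    (condMutualInfo_congr (fun _ _ => Iff.rfl) (fun _ _ => Iff.rfl) ?_)
  all_goals
    intro ω ω'
    simp only [s, Prod.mk.injEq, funext_iff, Fin.forall_fin_succ', Option.elim_none,
      Option.elim_some, Fin.val_last, Fin.val_castSucc, Fin.castLE, forall_and]
    tauto

/-- monotonicity of per-timestep estimation error for iid data. -/
theorem statement7 {Ω Θ 𝒳 𝒴 : Type*} [Fintype Ω] [Fintype Θ] [Fintype 𝒳] [Fintype 𝒴]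
    (n : ℕ) (hn : 1 ≤ n)
    (π : Θ → ℝ) (hπ : (∀ ν, 0 ≤ π ν) ∧ ∑ ν, π ν = 1)
    (μ : 𝒳 → ℝ) (hμ : (∀ a, 0 ≤ μ a) ∧ ∑ a, μ a = 1)
    (k : 𝒴 → Θ → 𝒳 → ℝ) (hk : ∀ ν a, (∀ b, 0 ≤ k b ν a) ∧ ∑ b, k b ν a = 1)
    (p : Ω → ℝ) (hp0 : ∀ ω, 0 ≤ p ω) (hp1 : ∑ ω, p ω = 1)
    (θ : Ω → Θ) (X : Fin (n + 1) → Ω → 𝒳) (Y : Fin (n + 1) → Ω → 𝒴)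
    (hjoint : ∀ (ν : Θ) (x : Fin (n + 1) → 𝒳) (y : Fin (n + 1) → 𝒴),
      pr p (fun ω => (θ ω, fun s => X s ω, fun s => Y s ω)) (ν, x, y)
        = π ν * ∏ s : Fin (n + 1), μ (x s) * k (y s) ν (x s)) :
    ∀ (t : ℕ) (ht : t + 1 ≤ n),
      condMutualInfo p (Y ⟨t + 1, by omega⟩) θ
        (fun ω => ((fun i : Fin (t + 2) => X ⟨(i : ℕ), by have := i.isLt; omega⟩ ω),
                   (fun i : Fin (t + 1) => Y ⟨(i : ℕ), by have := i.isLt; omega⟩ ω)))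
      ≤ condMutualInfo p (Y ⟨t, by omega⟩) θ
        (fun ω => ((fun i : Fin (t + 1) => X ⟨(i : ℕ), by have := i.isLt; omega⟩ ω),
                   (fun i : Fin t => Y ⟨(i : ℕ), by have := i.isLt; omega⟩ ω))) := by
  intro t ht
  exact statement7_general hp0 (isCondIID_prodMk (μ := fun _ => μ) (fun _ => hμ.2)
    (fun ν a => (hk ν a).2) hjoint) t (Nat.lt_succ_of_le ht)

end
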